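/- arXiv:2602.07221 — 2 statements merged into one kernel-verified Lean document; each statement's English description precedes it below -/
import Mathlib

section
/- Let s ∈ (0,1) and let N > 2s be a positive integer, and let ρ : ℝ → ℝ be a C^∞ function with compact support in (−2,2), 0 ≤ ρ ≤ 1 and ρ ≡ 1 on (−1,1). Then the function (y,z) ↦ (ρ(|y|²) − ρ(|z|²)) (|z|^{2s−N} − |y|^{2s−N}) / |z−y|^{N+2s} is Lebesgue integrable on ℝ^N × ℝ^N. -/
open MeasureTheory Real Filter Metric

noncomputable section

/-- Euclidean space `ℝ^N`. -/
abbrev Euc (N : ℕ) := EuclideanSpace ℝ (Fin N)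

/-- The normalizing constant `c_{N,s}` of the fractional Laplacian. -/
def cNs (N : ℕ) (s : ℝ) : ℝ :=
  Real.pi ^ ((N : ℝ) / 2) * s * (4 : ℝ) ^ s * Real.Gamma (((N : ℝ) + 2 * s) / 2) /
    Real.Gamma (1 - s)

/-- The constant `b_{N,s}` of the fundamental solution. -/
def bNs (N : ℕ) (s : ℝ) : ℝ :=
  Real.pi ^ (-(N : ℝ) / 2) * (4 : ℝ) ^ (-s) * Real.Gamma (((N : ℝ) - 2 * s) / 2) /
    Real.Gamma s

/-- The fractional Laplacian `(-Δ)^s u (x)`, via the absolutely convergent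
symmetrized integral `-(c_{N,s}/2) ∫ (u(x+h)+u(x-h)-2u(x))/|h|^{N+2s} dh`. -/
def fracLap (N : ℕ) (s : ℝ) (u : Euc N → ℝ) (x : Euc N) : ℝ :=
  -(cNs N s / 2) * ∫ h : Euc N, (u (x + h) + u (x - h) - 2 * u x) / ‖h‖ ^ ((N : ℝ) + 2 * s)

/-- `φ ∈ C_c^∞(Ω)`. -/
def IsTestFn (N : ℕ) (Ω : Set (Euc N)) (φ : Euc N → ℝ) : Prop :=
  ContDiff ℝ (⊤ : ℕ∞) φ ∧ HasCompactSupport φ ∧ tsupport φ ⊆ Ω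

/-- The signed distance `δ̄(z) = dist(z, Ωᶜ) - dist(z, Ω)`. -/
def signedDistFn (N : ℕ) (Ω : Set (Euc N)) (z : Euc N) : ℝ :=
  Metric.infDist z Ωᶜ - Metric.infDist z Ω

/-- A bounded open set of class `C^{1,1}`: the signed distance is differentiable with
Lipschitz gradient on a neighborhood of `∂Ω`. -/
def IsC11 (N : ℕ) (Ω : Set (Euc N)) : Prop :=
  IsOpen Ω ∧ Bornology.IsBounded Ω ∧
    ∃ U : Set (Euc N), IsOpen U ∧ frontier Ω ⊆ U ∧
      (∀ z ∈ U, DifferentiableAt ℝ (signedDistFn N Ω) z) ∧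
      ∃ K : NNReal, LipschitzOnWith K (fun z => gradient (signedDistFn N Ω) z) U

/-- `δ(z) = dist(z, ∂Ω)`. -/
def bdist (N : ℕ) (Ω : Set (Euc N)) (z : Euc N) : ℝ := Metric.infDist z (frontier Ω)

/-- The outward unit normal `ν = -∇δ̄` (meaningful on `∂Ω`). -/
def outNormal (N : ℕ) (Ω : Set (Euc N)) (θ : Euc N) : Euc N :=
  -gradient (signedDistFn N Ω) θ

/-- The surface measure on `∂Ω`: the `(N-1)`-dimensional Hausdorff measure
restricted to `∂Ω`. -/
def surf (N : ℕ) (Ω : Set (Euc N)) : Measure (Euc N) :=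
  (μH[(N : ℝ) - 1]).restrict (frontier Ω)

/-- `g` is the fractional normal trace `γ_0^s(w)` on `∂Ω`. -/
def HasFracTrace (N : ℕ) (s : ℝ) (Ω : Set (Euc N)) (w g : Euc N → ℝ) : Prop :=
  ContinuousOn g (frontier Ω) ∧
    ∀ θ ∈ frontier Ω,
      Filter.Tendsto (fun z => w z / bdist N Ω z ^ s) (nhdsWithin θ Ω) (nhds (g θ))

/-- `G` is a Green function of `(-Δ)^s` in `Ω` with pole at `x`, with constant `C`
in the Green function estimate. -/
def IsGreenFn (N : ℕ) (s : ℝ) (Ω : Set (Euc N)) (C : ℝ) (x : Euc N) (G : Euc N → ℝ) : Prop :=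
  Integrable G ∧ (∀ z, z ∉ Ω → G z = 0) ∧
    (∀ φ, IsTestFn N Ω φ → ∫ z in Ω, G z * fracLap N s φ z = φ x) ∧
    ∀ z, z ≠ x → 0 ≤ G z ∧
      G z ≤ C * min (‖x - z‖ ^ (2 * s - (N : ℝ)))
        (bdist N Ω x ^ s * bdist N Ω z ^ s * ‖x - z‖ ^ (-(N : ℝ)))

/-- The quadratic form `E_s(u,v)` associated with `(-Δ)^s`. -/
def Es (N : ℕ) (s : ℝ) (u v : Euc N → ℝ) : ℝ :=
  (cNs N s / 2) *
    ∫ p : Euc N × Euc N, (u p.1 - u p.2) * (v p.1 - v p.2) / ‖p.1 - p.2‖ ^ ((N : ℝ) + 2 * s)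

/-- `u` is a weak solution of `(-Δ)^s u = f(·,u)` in `Ω`, `u = 0` outside `Ω`. -/
def IsWeakSolution (N : ℕ) (s : ℝ) (Ω : Set (Euc N)) (f : Euc N → ℝ → ℝ) (u : Euc N → ℝ) :
    Prop :=
  (∃ C : NNReal, HolderWith C s.toNNReal u) ∧ (∀ z, z ∉ Ω → u z = 0) ∧
    ∀ φ, IsTestFn N Ω φ → Es N s u φ = ∫ z in Ω, f z (u z) * φ z

/-- Locally `β`-Hölder continuous function. -/
def LocHolder {X : Type*} [PseudoEMetricSpace X] (β : ℝ) (f : X → ℝ) : Prop :=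
  ∀ p : X, ∃ t ∈ nhds p, ∃ C : NNReal, HolderOnWith C β.toNNReal f t

/-!
The factor `ρ(|y|²) - ρ(|z|²)` vanishes when `y` and `z` both lie near the origin, where
`|·|^(2s-N)` is singular, and when both lie far from it. On nearby points where it survives, both
factors of the numerator are Lipschitz, so the numerator is dominated by
`(A(y) + A(z)) min(1, |y-z|²)`, where `A` is `1 + |·|^(2s-N)` cut off to a compact set and
therefore integrable. As `min(1, |h|²) / |h|^(N+2s)` is integrable in `h`, the integrand is
dominated by a convolution integrand of two integrable functions.
-/

open scoped NNReal Topology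

lemma integrableOn_Ioi_min_one_rpow_mul_rpow {p t : ℝ} (ht : 0 < t) (htp : t < p) :
    IntegrableOn (fun r : ℝ ↦ min 1 (r ^ p) * r ^ (-1 - t)) (Set.Ioi 0) := by
  have near : IntegrableOn (fun r : ℝ ↦ min 1 (r ^ p) * r ^ (-1 - t)) (Set.Ioo 0 1) := by
    refine ((intervalIntegral.integrableOn_Ioo_rpow_iff (s := p - 1 - t) one_pos).2
      (by linarith)).congr_fun (fun r ⟨hr0, hr1⟩ ↦ ?_) measurableSet_Ioo
    simp only [min_eq_right (rpow_le_one hr0.le hr1.le (ht.trans htp).le), ← rpow_add hr0]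
    ring_nf
  have far : IntegrableOn (fun r : ℝ ↦ min 1 (r ^ p) * r ^ (-1 - t)) (Set.Ici 1) := by
    refine ((integrableOn_Ici_iff_integrableOn_Ioi).2
      (integrableOn_Ioi_rpow_of_lt (a := -1 - t) (by linarith) one_pos)).congr_fun
      (fun r (hr : 1 ≤ r) ↦ ?_) measurableSet_Ici
    simp only [min_eq_left (one_le_rpow hr (ht.trans htp).le), one_mul]
  exact Set.Ioo_union_Ici_eq_Ioi (zero_lt_one (α := ℝ)) ▸ near.union far

lemma lipschitzOnWith_rpow_const_Ici {q δ : ℝ} (hq : q ≤ 1) (hδ : 0 < δ) :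
    LipschitzOnWith (|q| * δ ^ (q - 1)).toNNReal (fun r : ℝ ↦ r ^ q) (Set.Ici δ) := by
  refine (convex_Ici δ).lipschitzOnWith_of_nnnorm_deriv_le
    (fun r hr ↦ differentiableAt_rpow_const_of_ne q (hδ.trans_le hr).ne') fun r hr ↦ ?_
  have hr0 : 0 < r := hδ.trans_le hr
  rw [← NNReal.coe_le_coe, coe_nnnorm, Real.coe_toNNReal _ (by positivity), Real.deriv_rpow_const,
    norm_mul, Real.norm_eq_abs, Real.norm_of_nonneg (rpow_nonneg hr0.le _)]
  exact mul_le_mul_of_nonneg_left (rpow_le_rpow_of_nonpos hδ hr (by linarith)) (abs_nonneg q)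

lemma sq_le_one_add_sq_mul_min {d δ : ℝ} (h : d ^ 2 ≤ δ ^ 2) :
    d ^ 2 ≤ (1 + δ ^ 2) * min 1 (d ^ 2) := by
  rw [mul_min_of_nonneg _ _ (by positivity)]
  exact le_min (by linarith) (by nlinarith [mul_nonneg (sq_nonneg δ) (sq_nonneg d)])

lemma one_le_one_add_inv_sq_mul_min {d δ : ℝ} (hδ : 0 < δ) (h : δ ≤ d) :
    1 ≤ (1 + δ⁻¹ ^ 2) * min 1 (d ^ 2) := by
  have hdδ : 1 ≤ δ⁻¹ * d := by rwa [inv_mul_eq_div, one_le_div hδ]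
  rw [mul_min_of_nonneg _ _ (by positivity)]
  exact le_min (by linarith [sq_nonneg δ⁻¹]) (by nlinarith [sq_nonneg d])

/-- The weight `1 + |g|` cut off to `S`. It dominates products of increments
`|f y - f z| * |g y - g z|` when `f` is supported in `S` and `g` is bounded outside `S`. -/
def cutoffWeight {X : Type*} (S : Set X) (g : X → ℝ) : X → ℝ :=
  S.indicator fun x ↦ 1 + |g x|

section CutoffWeight

variable {X : Type*} {S : Set X} {f g : X → ℝ}

lemma cutoffWeight_nonneg (x : X) : 0 ≤ cutoffWeight S g x :=
  Set.indicator_nonneg (fun _ _ ↦ by positivity) x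

lemma cutoffWeight_of_mem {x : X} (hx : x ∈ S) : cutoffWeight S g x = 1 + |g x| :=
  Set.indicator_of_mem hx _

lemma abs_le_cutoffWeight_add {B : ℝ} (hgB : ∀ x ∉ S, |g x| ≤ B) (x : X) :
    |g x| ≤ cutoffWeight S g x + |B| := by
  by_cases hx : x ∈ S
  · linarith [cutoffWeight_of_mem (g := g) hx, abs_nonneg B]
  · linarith [hgB x hx, cutoffWeight_nonneg (S := S) (g := g) x, le_abs_self B]

lemma one_le_cutoffWeight_add_cutoffWeight (hfS : f.support ⊆ S) {y z : X} (h : f y ≠ f z) :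
    1 ≤ cutoffWeight S g y + cutoffWeight S g z := by
  have hyz : y ∈ S ∨ z ∈ S := by
    by_contra! hS
    exact h (by rw [Function.notMem_support.1 (mt (@hfS y) hS.1),
      Function.notMem_support.1 (mt (@hfS z) hS.2)])
  rcases hyz with hy | hz
  · linarith [cutoffWeight_of_mem (g := g) hy, cutoffWeight_nonneg (S := S) (g := g) z,
      abs_nonneg (g y)]
  · linarith [cutoffWeight_of_mem (g := g) hz, cutoffWeight_nonneg (S := S) (g := g) y,
      abs_nonneg (g z)]

lemma abs_sub_mul_abs_sub_le_mul_cutoffWeight {M B : ℝ} (hfM : ∀ x, |f x| ≤ M)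
    (hfS : f.support ⊆ S) (hgB : ∀ x ∉ S, |g x| ≤ B) (y z : X) :
    |f y - f z| * |g y - g z| ≤
      2 * M * (1 + 2 * |B|) * (cutoffWeight S g y + cutoffWeight S g z) := by
  have hM : 0 ≤ M := (abs_nonneg _).trans (hfM y)
  have hy := cutoffWeight_nonneg (S := S) (g := g) y
  have hz := cutoffWeight_nonneg (S := S) (g := g) z
  obtain h | h := eq_or_ne (f y) (f z)
  · rw [h, sub_self, abs_zero, zero_mul]
    positivity
  have hf : |f y - f z| ≤ 2 * M := by linarith [abs_sub (f y) (f z), hfM y, hfM z]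
  have hg : |g y - g z| ≤ (1 + 2 * |B|) * (cutoffWeight S g y + cutoffWeight S g z) := by
    nlinarith [abs_sub (g y) (g z), abs_le_cutoffWeight_add hgB y, abs_le_cutoffWeight_add hgB z,
      one_le_cutoffWeight_add_cutoffWeight (g := g) hfS h, abs_nonneg B]
  rw [mul_assoc]
  gcongr

end CutoffWeight

section PseudoMetricSpace

variable {X : Type*} [PseudoMetricSpace X] {f g : X → ℝ} {K L : ℝ≥0} {S : Set X} {x₀ : X}
  {δ M B : ℝ}

lemma abs_sub_mul_abs_sub_le_mul_dist_sq (hf : LipschitzWith K f)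
    (hf₀ : ∀ x ∈ ball x₀ (2 * δ), f x = f x₀) (hg : LipschitzOnWith L g (ball x₀ δ)ᶜ) {y z : X}
    (hyz : dist y z < δ) : |f y - f z| * |g y - g z| ≤ K * L * dist y z ^ 2 := by
  have notMem_ball {u v : X} (huv : dist u v < δ) (hne : f u ≠ f v) : u ∉ ball x₀ δ := by
    intro hu
    rw [mem_ball] at hu
    have hu' : u ∈ ball x₀ (2 * δ) := by
      rw [mem_ball]
      linarith [dist_nonneg (x := u) (y := v)]
    have hv' : v ∈ ball x₀ (2 * δ) := by
      rw [mem_ball]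
      linarith [dist_triangle_left v x₀ u]
    exact hne (by rw [hf₀ u hu', hf₀ v hv'])
  obtain h | h := eq_or_ne (f y) (f z)
  · rw [h, sub_self, abs_zero, zero_mul]
    positivity
  calc |f y - f z| * |g y - g z| ≤ (K * dist y z) * (L * dist y z) :=
        mul_le_mul (hf.dist_le_mul y z)
          (hg.dist_le_mul y (notMem_ball hyz h) z (notMem_ball (dist_comm y z ▸ hyz) h.symm))
          (abs_nonneg _) (by positivity)
    _ = K * L * dist y z ^ 2 := by ring

lemma exists_abs_sub_mul_abs_sub_le_mul_min (hδ : 0 < δ) (hf : LipschitzWith K f)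
    (hfM : ∀ x, |f x| ≤ M) (hfS : f.support ⊆ S) (hf₀ : ∀ x ∈ ball x₀ (2 * δ), f x = f x₀)
    (hg : LipschitzOnWith L g (ball x₀ δ)ᶜ) (hgB : ∀ x ∉ S, |g x| ≤ B) :
    ∃ C, ∀ y z, |f y - f z| * |g y - g z| ≤
      C * ((cutoffWeight S g y + cutoffWeight S g z) * min 1 (dist y z ^ 2)) := by
  set A := cutoffWeight S g
  set Cfar := 2 * M * (1 + 2 * |B|)
  refine ⟨max (Cfar * (1 + δ⁻¹ ^ 2)) (K * L * (1 + δ ^ 2)), fun y z ↦ ?_⟩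
  have hCfar : 0 ≤ Cfar :=
    mul_nonneg (mul_nonneg zero_le_two ((abs_nonneg _).trans (hfM y))) (by positivity)
  have hA : 0 ≤ A y + A z := add_nonneg (cutoffWeight_nonneg y) (cutoffWeight_nonneg z)
  obtain h | h := eq_or_ne (f y) (f z)
  · rw [h, sub_self, abs_zero, zero_mul]
    positivity
  rcases le_or_gt δ (dist y z) with hfar | hnear
  · calc |f y - f z| * |g y - g z| ≤ Cfar * (A y + A z) * 1 := by
          rw [mul_one]
          exact abs_sub_mul_abs_sub_le_mul_cutoffWeight hfM hfS hgB y z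
      _ ≤ Cfar * (A y + A z) * ((1 + δ⁻¹ ^ 2) * min 1 (dist y z ^ 2)) := by
          gcongr
          exact one_le_one_add_inv_sq_mul_min hδ hfar
      _ = Cfar * (1 + δ⁻¹ ^ 2) * ((A y + A z) * min 1 (dist y z ^ 2)) := by ring
      _ ≤ _ := by gcongr; exact le_max_left _ _
  · calc |f y - f z| * |g y - g z| ≤ K * L * dist y z ^ 2 :=
          abs_sub_mul_abs_sub_le_mul_dist_sq hf hf₀ hg hnear
      _ ≤ K * L * ((1 + δ ^ 2) * min 1 (dist y z ^ 2)) := by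
          gcongr
          exact sq_le_one_add_sq_mul_min (by gcongr)
      _ = K * L * (1 + δ ^ 2) * (1 * min 1 (dist y z ^ 2)) := by ring
      _ ≤ K * L * (1 + δ ^ 2) * ((A y + A z) * min 1 (dist y z ^ 2)) := by
          gcongr
          exact one_le_cutoffWeight_add_cutoffWeight hfS h
      _ ≤ _ := by gcongr; exact le_max_right _ _

end PseudoMetricSpace

section Convolution

variable {G : Type*} [MeasurableSpace G] [AddGroup G] [MeasurableAdd₂ G] [MeasurableNeg G]
  {μ : Measure G} [SFinite μ] [μ.IsAddRightInvariant]

lemma integrable_prod_add_mul_comp_sub {A k : G → ℝ} (hA : Integrable A μ)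
    (hk : Integrable k μ) (hk_even : ∀ x, k (-x) = k x) :
    Integrable (fun p : G × G ↦ (A p.1 + A p.2) * k (p.1 - p.2)) (μ.prod μ) := by
  have h : Integrable (fun p : G × G ↦ A p.2 * k (p.1 - p.2)) (μ.prod μ) :=
    hA.convolution_integrand (ContinuousLinearMap.mul ℝ ℝ) hk
  refine (h.swap.add h).congr (ae_of_all _ fun p ↦ ?_)
  simp only [Pi.add_apply, Function.comp_apply, Prod.fst_swap, Prod.snd_swap,
    ← hk_even (p.2 - p.1), neg_sub, add_mul]

end Convolution

section AddHaar

variable {E : Type*} [NormedAddCommGroup E] [NormedSpace ℝ E] [FiniteDimensional ℝ E]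
  [MeasurableSpace E] [BorelSpace E] {μ : Measure E} [μ.IsAddHaarMeasure]

lemma integrable_min_one_norm_rpow_div_norm_rpow [Nontrivial E] {p t : ℝ} (ht : 0 < t)
    (htp : t < p) :
    Integrable (fun x : E ↦ min 1 (‖x‖ ^ p) / ‖x‖ ^ (Module.finrank ℝ E + t)) μ := by
  rw [integrable_fun_norm_addHaar μ
    (f := fun r ↦ min 1 (r ^ p) / r ^ (Module.finrank ℝ E + t))]
  refine (integrableOn_Ioi_min_one_rpow_mul_rpow ht htp).congr_fun (fun r hr ↦ ?_)
    measurableSet_Ioi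
  have hr : 0 < r := hr
  simp only [smul_eq_mul]
  rw [← rpow_natCast, Nat.cast_pred Module.finrank_pos, mul_div_left_comm, ← rpow_sub hr]
  ring_nf

theorem integrable_prod_sub_mul_sub_div_norm_rpow [Nontrivial E] {f g : E → ℝ} {K L : ℝ≥0}
    {S : Set E} {x₀ : E} {δ B t : ℝ} (ht0 : 0 < t) (ht2 : t < 2) (hδ : 0 < δ)
    (hf : LipschitzWith K f) (hS : IsCompact S) (hfS : f.support ⊆ S)
    (hf₀ : ∀ x ∈ ball x₀ (2 * δ), f x = f x₀) (hg : LocallyIntegrable g μ)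
    (hgL : LipschitzOnWith L g (ball x₀ δ)ᶜ) (hgB : ∀ x ∉ S, |g x| ≤ B) :
    Integrable (fun p : E × E ↦ (f p.1 - f p.2) * (g p.1 - g p.2) /
      ‖p.1 - p.2‖ ^ (Module.finrank ℝ E + t)) (μ.prod μ) := by
  have := FiniteDimensional.proper_real E
  have hfc : HasCompactSupport f := .of_support_subset_isCompact hS hfS
  obtain ⟨M, hM⟩ := hfc.exists_bound_of_continuous hf.continuous
  obtain ⟨C, hC⟩ := exists_abs_sub_mul_abs_sub_le_mul_min hδ hf hM hfS hf₀ hgL hgB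
  have hA : Integrable (cutoffWeight S g) μ :=
    (integrable_indicator_iff hS.measurableSet).2 <|
      (integrableOn_const hS.measure_ne_top).add (hg.integrableOn_isCompact hS).norm
  have hk : Integrable (fun h : E ↦ min 1 (‖h‖ ^ 2) / ‖h‖ ^ (Module.finrank ℝ E + t)) μ := by
    simpa only [rpow_two] using integrable_min_one_norm_rpow_div_norm_rpow ht0 ht2
  refine ((integrable_prod_add_mul_comp_sub hA hk (by simp)).const_mul C).mono' ?_
    (ae_of_all _ fun ⟨y, z⟩ ↦ ?_)
  · have hfm : Measurable f := hf.continuous.measurable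
    have hgm := hg.aestronglyMeasurable
    have hnum := ((hfm.comp measurable_fst).sub (hfm.comp measurable_snd)).aestronglyMeasurable.mul
      (hgm.comp_fst.sub hgm.comp_snd)
    have hden : Measurable fun p : E × E ↦ ‖p.1 - p.2‖ ^ (Module.finrank ℝ E + t) := by fun_prop
    exact hnum.div₀ hden.aestronglyMeasurable
  · rw [norm_div, norm_mul, Real.norm_eq_abs, Real.norm_eq_abs, Real.norm_of_nonneg (by positivity),
      mul_div_assoc', mul_div_assoc', ← dist_eq_norm y z]
    exact div_le_div_of_nonneg_right (hC y z) (by positivity)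

theorem statement7_general {f : E → ℝ} {K : ℝ≥0} {a t : ℝ} (ht0 : 0 < t) (ht2 : t < 2)
    (ha0 : 0 ≤ a) (ha : a < Module.finrank ℝ E) (hf : LipschitzWith K f)
    (hfc : HasCompactSupport f) (hf₀ : ∀ᶠ x in 𝓝 0, f x = f 0) :
    Integrable (fun p : E × E ↦ (f p.1 - f p.2) * (‖p.2‖ ^ (-a) - ‖p.1‖ ^ (-a)) /
      ‖p.2 - p.1‖ ^ (Module.finrank ℝ E + t)) (μ.prod μ) := by
  have := FiniteDimensional.proper_real E
  have hd : 0 < Module.finrank ℝ E := by exact_mod_cast ha0.trans_lt ha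
  have : Nontrivial E := Module.nontrivial_of_finrank_pos hd
  obtain ⟨ε, hε, hfε⟩ := eventually_nhds_iff_ball.1 hf₀
  have hlip : LipschitzOnWith (|-a| * (ε / 2) ^ (-a - 1)).toNNReal (fun x : E ↦ ‖x‖ ^ (-a))
      (ball 0 (ε / 2))ᶜ := by
    have h := (lipschitzOnWith_rpow_const_Ici (q := -a) (by linarith) (half_pos hε)).comp
      (lipschitzWith_one_norm (E := E)).lipschitzOnWith (s := (ball 0 (ε / 2))ᶜ)
      fun x hx ↦ by simpa using hx
    rwa [mul_one] at h
  have hbdd : ∀ x ∉ tsupport f ∪ closedBall 0 (ε / 2), |‖x‖ ^ (-a)| ≤ (ε / 2) ^ (-a) := by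
    intro x hx
    have hx : ε / 2 ≤ ‖x‖ := by
      simp only [Set.mem_union, mem_closedBall_zero_iff, not_or, not_le] at hx
      exact hx.2.le
    rw [abs_of_nonneg (by positivity)]
    exact rpow_le_rpow_of_nonpos (half_pos hε) hx (by linarith)
  have hloc : LocallyIntegrable (fun x : E ↦ ‖x‖ ^ (-a)) μ := by
    refine locallyIntegrable_of_norm_le_rpow (C := 1) hd ha (ae_of_all _ fun x ↦ ?_)
      (by fun_prop : Measurable fun x : E ↦ ‖x‖ ^ (-a)).aestronglyMeasurable
    rw [one_mul, Real.norm_of_nonneg (by positivity)]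
  convert! (integrable_prod_sub_mul_sub_div_norm_rpow ht0 ht2 (half_pos hε) hf
    (hfc.isCompact.union (isCompact_closedBall 0 (ε / 2)))
    ((subset_tsupport f).trans Set.subset_union_left) (by rwa [mul_div_cancel₀ ε two_ne_zero])
    hloc hlip hbdd).neg using 2 with p
  rw [Pi.neg_apply, norm_sub_rev]
  ring

end AddHaar

lemma hasCompactSupport_comp_of_tendsto_cocompact {X Y Z : Type*} [TopologicalSpace X] [R1Space X]
    [TopologicalSpace Y] [R1Space Y] [Zero Z] {φ : X → Y} {f : Y → Z} (hf : HasCompactSupport f)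
    (hφ : Tendsto φ (cocompact X) (cocompact Y)) : HasCompactSupport (f ∘ φ) := by
  rw [hasCompactSupport_iff_eventuallyEq, coclosedCompact_eq_cocompact] at hf ⊢
  exact hf.comp_tendsto hφ

lemma tendsto_norm_sq_cocompact (E : Type*) [SeminormedAddCommGroup E] [ProperSpace E] :
    Tendsto (fun x : E ↦ ‖x‖ ^ 2) (cocompact E) (cocompact ℝ) :=
  ((tendsto_pow_atTop two_ne_zero).comp tendsto_norm_cocompact_atTop).mono_right
    atTop_le_cocompact

/-- integrability of the double integrand of Lemma 1.8 (case `N > 2s`). -/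
theorem statement7
    (s : ℝ) (hs0 : 0 < s) (hs1 : s < 1)
    (N : ℕ) (hN : 2 * s < N)
    (ρ : ℝ → ℝ) (hρsm : ContDiff ℝ (⊤ : ℕ∞) ρ) (hρc : HasCompactSupport ρ)
    (hρsupp : tsupport ρ ⊆ Set.Ioo (-2 : ℝ) 2)
    (hρ0 : ∀ t, 0 ≤ ρ t) (hρle : ∀ t, ρ t ≤ 1)
    (hρ1 : ∀ t ∈ Set.Ioo (-1 : ℝ) 1, ρ t = 1) :
    Integrable (fun p : Euc N × Euc N =>
      (ρ (‖p.1‖ ^ 2) - ρ (‖p.2‖ ^ 2)) *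
        (‖p.2‖ ^ (2 * s - (N : ℝ)) - ‖p.1‖ ^ (2 * s - (N : ℝ))) /
        ‖p.2 - p.1‖ ^ ((N : ℝ) + 2 * s)) := by
  have hc : HasCompactSupport fun x : Euc N ↦ ρ (‖x‖ ^ 2) :=
    hasCompactSupport_comp_of_tendsto_cocompact hρc (tendsto_norm_sq_cocompact (Euc N))
  obtain ⟨K, hK⟩ :=
    ContDiff.lipschitzWith_of_hasCompactSupport hc (hρsm.comp (contDiff_norm_sq ℝ)) (by simp)
  have hρ₀ : ∀ᶠ t in 𝓝 0, ρ t = ρ 0 := by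
    filter_upwards [Ioo_mem_nhds (neg_one_lt_zero (R := ℝ)) one_pos] with t ht
    rw [hρ1 t ht, hρ1 0 (by norm_num)]
  have hf₀ : ∀ᶠ x : Euc N in 𝓝 0, ρ (‖x‖ ^ 2) = ρ (‖(0 : Euc N)‖ ^ 2) := by
    simpa using ((continuous_norm.pow 2).tendsto' (0 : Euc N) 0 (by simp)).eventually hρ₀
  simpa only [neg_sub, finrank_euclideanSpace_fin, Measure.volume_eq_prod] using
    statement7_general (μ := volume) (a := N - 2 * s) (t := 2 * s) (by linarith) (by linarith)
      (by linarith) (by simpa using hs0) hK hc hf₀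
end
end

section
/- Let N ≥ 2 be an integer and β ∈ (0,1). Then for all y, z ∈ ℝ^N with 0 < |y| ≤ |z|, one has | |y|^{1−N} − |z|^{1−N} | ≤ (N−1) ( (1−β)/(N+β−1) )^{1−β} |y|^{1−N−β} |z−y|^β. -/
open MeasureTheory Real Filter Metric

noncomputable section

/-!
With `a = ‖y‖`, `d = ‖z‖` and `p = N - 1`, the left-hand side is `p * ∫ t in a..d, t ^ (-p - 1)`.
Writing the integrand as `(t ^ s) ^ (1 - β)` with `s = -(p + 1) / (1 - β) < -1`, Hölder's inequality
(in the form of Jensen's inequality for the concave function `x ↦ x ^ (1 - β)`) bounds the integral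
by `(d - a) ^ β * (∫ t in a..d, t ^ s) ^ (1 - β)`. Extending the last integral to `(a, ∞)` yields
the constant, and `d - a ≤ ‖z - y‖` concludes.
-/

theorem integral_rpow_le_measureReal_univ_rpow_mul_integral_rpow {α : Type*}
    [MeasurableSpace α] {μ : Measure α} [IsFiniteMeasure μ] {f : α → ℝ} {θ : ℝ}
    (hθ0 : 0 ≤ θ) (hθ1 : θ ≤ 1) (hf0 : 0 ≤ᵐ[μ] f) (hf : Integrable f μ) :
    ∫ x, f x ^ θ ∂μ ≤ μ.real Set.univ ^ (1 - θ) * (∫ x, f x ∂μ) ^ θ := by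
  have hint : 0 ≤ ∫ x, f x ∂μ := integral_nonneg_of_ae hf0
  by_cases hfθ : Integrable (fun x ↦ f x ^ θ) μ
  swap
  · rw [integral_undef hfθ]
    positivity
  rcases eq_zero_or_neZero μ with rfl | _
  · rw [integral_zero_measure]
    positivity
  have hm : 0 < μ.real Set.univ := measureReal_univ_pos
  have jensen : ⨍ x, f x ^ θ ∂μ ≤ (⨍ x, f x ∂μ) ^ θ :=
    (concaveOn_rpow hθ0 hθ1).le_map_average (continuous_rpow_const hθ0).continuousOn
      isClosed_Ici hf0 hf hfθ
  rw [average_eq, average_eq, smul_eq_mul, smul_eq_mul, inv_mul_le_iff₀ hm] at jensen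
  calc ∫ x, f x ^ θ ∂μ
      ≤ μ.real Set.univ * ((μ.real Set.univ)⁻¹ * ∫ x, f x ∂μ) ^ θ := jensen
    _ = μ.real Set.univ ^ (1 - θ) * (∫ x, f x ∂μ) ^ θ := by
      rw [mul_rpow (by positivity) hint, inv_rpow hm.le, rpow_sub hm, rpow_one, ← mul_assoc,
        div_eq_mul_inv]

theorem intervalIntegral_rpow_le_sub_rpow_mul_intervalIntegral_rpow {a b θ : ℝ} {f : ℝ → ℝ}
    (hab : a ≤ b) (hθ0 : 0 ≤ θ) (hθ1 : θ ≤ 1) (hf0 : ∀ t ∈ Set.Ioc a b, 0 ≤ f t)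
    (hf : IntervalIntegrable f volume a b) :
    ∫ t in a..b, f t ^ θ ≤ (b - a) ^ (1 - θ) * (∫ t in a..b, f t) ^ θ := by
  have hvol : (volume.restrict (Set.Ioc a b)).real Set.univ = b - a := by
    rw [measureReal_restrict_apply_univ, volume_real_Ioc_of_le hab]
  rw [intervalIntegral.integral_of_le hab, intervalIntegral.integral_of_le hab, ← hvol]
  exact integral_rpow_le_measureReal_univ_rpow_mul_integral_rpow hθ0 hθ1
    (ae_restrict_of_forall_mem measurableSet_Ioc hf0) hf.1

theorem intervalIntegral_rpow_le_of_lt_neg_one {a d s : ℝ} (ha : 0 < a) (had : a ≤ d)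
    (hs : s < -1) : ∫ t in a..d, t ^ s ≤ -a ^ (s + 1) / (s + 1) := by
  rw [intervalIntegral.integral_of_le had, ← integral_Ioi_rpow_of_lt hs ha]
  refine setIntegral_mono_set (integrableOn_Ioi_rpow_of_lt hs ha) ?_
    Set.Ioc_subset_Ioi_self.eventuallyLE
  exact ae_restrict_of_forall_mem measurableSet_Ioi fun t ht ↦ rpow_nonneg (ha.trans ht).le s

theorem rpow_neg_sub_rpow_neg_eq_mul_intervalIntegral {a d p : ℝ} (ha : 0 < a) (hd : 0 < d) :
    a ^ (-p) - d ^ (-p) = p * ∫ t in a..d, t ^ (-p - 1) := by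
  rcases eq_or_ne p 0 with rfl | hp
  · simp
  rw [integral_rpow (Or.inr ⟨by simpa, Set.notMem_uIcc_of_lt ha hd⟩), sub_add_cancel]
  field_simp
  ring

theorem intervalIntegral_rpow_neg_sub_one_le_mul_sub_rpow {a d p β : ℝ} (ha : 0 < a)
    (had : a ≤ d) (hpβ : 0 < p + β) (hβ0 : 0 ≤ β) (hβ1 : β < 1) :
    ∫ t in a..d, t ^ (-p - 1) ≤
      ((1 - β) / (p + β)) ^ (1 - β) * a ^ (-p - β) * (d - a) ^ β := by
  have hθ : 0 < 1 - β := sub_pos.2 hβ1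
  set s : ℝ := -(p + 1) / (1 - β) with hs
  have hsθ : s * (1 - β) = -p - 1 := by rw [hs, div_mul_cancel₀ _ hθ.ne']; ring
  have hs1 : s + 1 = -((p + β) / (1 - β)) := by rw [hs]; field_simp; ring
  have hs_lt : s < -1 := by rw [hs, div_lt_iff₀ hθ]; linarith
  have hpos : ∀ t ∈ Set.Icc a d, 0 ≤ t := fun t ht ↦ ha.le.trans ht.1
  have htail : -a ^ (s + 1) / (s + 1) = (1 - β) / (p + β) * a ^ (s + 1) := by
    rw [hs1, neg_div_neg_eq, div_div_eq_mul_div, mul_comm, div_mul_eq_mul_div]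
  calc ∫ t in a..d, t ^ (-p - 1)
      = ∫ t in a..d, (t ^ s) ^ (1 - β) := by
        refine intervalIntegral.integral_congr fun t ht ↦ ?_
        rw [Set.uIcc_of_le had] at ht
        simp only [← rpow_mul (hpos t ht), hsθ]
    _ ≤ (d - a) ^ (1 - (1 - β)) * (∫ t in a..d, t ^ s) ^ (1 - β) :=
        intervalIntegral_rpow_le_sub_rpow_mul_intervalIntegral_rpow had hθ.le (sub_le_self 1 hβ0)
          (fun t ht ↦ rpow_nonneg (hpos t (Set.Ioc_subset_Icc_self ht)) s)
          (intervalIntegral.intervalIntegrable_rpow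
            (Or.inr (Set.notMem_uIcc_of_lt ha (ha.trans_le had))))
    _ ≤ (d - a) ^ β * ((1 - β) / (p + β) * a ^ (s + 1)) ^ (1 - β) := by
        rw [sub_sub_cancel, ← htail]
        have : 0 ≤ d - a := sub_nonneg.2 had
        gcongr
        · exact intervalIntegral.integral_nonneg had fun t ht ↦ rpow_nonneg (hpos t ht) s
        · exact intervalIntegral_rpow_le_of_lt_neg_one ha had hs_lt
    _ = ((1 - β) / (p + β)) ^ (1 - β) * a ^ (-p - β) * (d - a) ^ β := by
        rw [mul_rpow (by positivity) (by positivity), ← rpow_mul ha.le, add_mul, hsθ, one_mul,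
          sub_add_sub_cancel, mul_comm]

theorem statement16_general {E : Type*} [SeminormedAddCommGroup E] {p β : ℝ} (hpβ : 0 < p + β)
    (hβ0 : 0 ≤ β) (hβ1 : β < 1) {y z : E} (hy : 0 < ‖y‖) (hyz : ‖y‖ ≤ ‖z‖) :
    |‖y‖ ^ (-p) - ‖z‖ ^ (-p)| ≤
      |p| * ((1 - β) / (p + β)) ^ (1 - β) * ‖y‖ ^ (-p - β) * ‖z - y‖ ^ β := by
  have : 0 < 1 - β := sub_pos.2 hβ1
  have : 0 ≤ ‖z‖ - ‖y‖ := sub_nonneg.2 hyz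
  have hint : 0 ≤ ∫ t in ‖y‖..‖z‖, t ^ (-p - 1) :=
    intervalIntegral.integral_nonneg hyz fun t ht ↦ rpow_nonneg (hy.le.trans ht.1) _
  calc |‖y‖ ^ (-p) - ‖z‖ ^ (-p)|
      = |p| * ∫ t in ‖y‖..‖z‖, t ^ (-p - 1) := by
        rw [rpow_neg_sub_rpow_neg_eq_mul_intervalIntegral hy (hy.trans_le hyz), abs_mul,
          abs_of_nonneg hint]
    _ ≤ |p| * (((1 - β) / (p + β)) ^ (1 - β) * ‖y‖ ^ (-p - β) * (‖z‖ - ‖y‖) ^ β) := by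
        gcongr
        exact intervalIntegral_rpow_neg_sub_one_le_mul_sub_rpow hy hyz hpβ hβ0 hβ1
    _ ≤ |p| * (((1 - β) / (p + β)) ^ (1 - β) * ‖y‖ ^ (-p - β) * ‖z - y‖ ^ β) := by
        gcongr
        exact norm_sub_norm_le z y
    _ = |p| * ((1 - β) / (p + β)) ^ (1 - β) * ‖y‖ ^ (-p - β) * ‖z - y‖ ^ β := by ring

/-- Hölder-type estimate on differences of powers `|·|^{1-N}`. -/
theorem statement16
    (N : ℕ) (hN : 2 ≤ N) (β : ℝ) (hβ0 : 0 < β) (hβ1 : β < 1) :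
    ∀ y z : Euc N, 0 < ‖y‖ → ‖y‖ ≤ ‖z‖ →
      |‖y‖ ^ (1 - (N : ℝ)) - ‖z‖ ^ (1 - (N : ℝ))| ≤
        ((N : ℝ) - 1) * ((1 - β) / ((N : ℝ) + β - 1)) ^ (1 - β) *
          ‖y‖ ^ (1 - (N : ℝ) - β) * ‖z - y‖ ^ β := by
  intro y z hy hyz
  have hN1 : 0 < (N : ℝ) - 1 := sub_pos.2 (Nat.one_lt_cast.2 hN)
  simpa only [abs_of_pos hN1, neg_sub, sub_add_eq_add_sub] using
    statement16_general (add_pos hN1 hβ0) hβ0.le hβ1 hy hyz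
end
end
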